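/- arXiv:1910.06442 — 2 statements merged into one kernel-verified Lean document; each statement's English description precedes it below -/
import Mathlib

section
/- Let D be a totally unimodular real m×n matrix such that no index i is a loop (De_i ≠ 0 for every i) and no index i is a coloop (e_i ∉ B for every i), and suppose that 2x ∈ B_I for every x ∈ B_I^#. Then every diagonal entry of the orthogonal projection matrix P onto the cut space B equals 1/2. -/
open Matrix

variable {m n : ℕ}

/-- The cycle space `Z = ker D`. -/
def cycleSpace (D : Matrix (Fin m) (Fin n) ℝ) : Submodule ℝ (Fin n → ℝ) :=
  LinearMap.ker D.mulVecLin

/-- The cut space `B = Z^⊥`, the orthogonal complement of the cycle space with respect to the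
standard inner product on `ℝⁿ`. -/
def cutSpace (D : Matrix (Fin m) (Fin n) ℝ) : Submodule ℝ (Fin n → ℝ) where
  carrier := {x | ∀ z ∈ cycleSpace D, x ⬝ᵥ z = 0}
  add_mem' := by
    intro a b ha hb z hz
    simp [add_dotProduct, ha z hz, hb z hz]
  zero_mem' := by
    intro z hz
    simp
  smul_mem' := by
    intro c a ha z hz
    simp [smul_dotProduct, ha z hz]

/-- The cycle lattice `Z_I = Z ∩ ℤⁿ`. -/
def cycleLattice (D : Matrix (Fin m) (Fin n) ℝ) : Set (Fin n → ℝ) :=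
  {x | x ∈ cycleSpace D ∧ ∀ i, ∃ k : ℤ, x i = (k : ℝ)}

/-- The cut lattice `B_I = B ∩ ℤⁿ`. -/
def cutLattice (D : Matrix (Fin m) (Fin n) ℝ) : Set (Fin n → ℝ) :=
  {x | x ∈ cutSpace D ∧ ∀ i, ∃ k : ℤ, x i = (k : ℝ)}

/-- The dual lattice `B_I^# = {x ∈ B : ⟨x,b⟩ ∈ ℤ for all b ∈ B_I}`. -/
def dualLattice (D : Matrix (Fin m) (Fin n) ℝ) : Set (Fin n → ℝ) :=
  {x | x ∈ cutSpace D ∧ ∀ b ∈ cutLattice D, ∃ k : ℤ, x ⬝ᵥ b = (k : ℝ)}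

/-- `P` is the orthogonal projection matrix onto the cut space `B`: `Px ∈ B` and
`x - Px ∈ B^⊥ = Z` for every `x`. -/
def IsCutProjection (D : Matrix (Fin m) (Fin n) ℝ) (P : Matrix (Fin n) (Fin n) ℝ) : Prop :=
  ∀ x : Fin n → ℝ, P.mulVec x ∈ cutSpace D ∧ x - P.mulVec x ∈ cycleSpace D

/-- if `D` is totally unimodular with no loops and no coloops, and `2x ∈ B_I` for
all `x ∈ B_I^#`, then every diagonal entry of the orthogonal projection onto the cut space
equals `1/2`. -/
theorem stmt7 (m n : ℕ) (D : Matrix (Fin m) (Fin n) ℝ)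
    (hTU : D.IsTotallyUnimodular)
    (hloop : ∀ i : Fin n, D.mulVec (Pi.single i (1 : ℝ)) ≠ 0)
    (hcoloop : ∀ i : Fin n, Pi.single i (1 : ℝ) ∉ cutSpace D)
    (hexp : ∀ x ∈ dualLattice D, (2 : ℝ) • x ∈ cutLattice D)
    (P : Matrix (Fin n) (Fin n) ℝ) (hP : IsCutProjection D P) :
    ∀ i : Fin n, P i i = 1/2 := by
  intro i
  obtain ⟨h1, h2⟩ := hP (Pi.single i 1)
  set p := P.mulVec (Pi.single i (1 : ℝ)) with hp
  have hpi : p i = P i i := by simp [hp]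
  have hdual : p ∈ dualLattice D := by
    refine ⟨h1, fun b hb => ?_⟩
    obtain ⟨k, hk⟩ := hb.2 i
    refine ⟨k, ?_⟩
    have h := hb.1 _ h2
    rw [dotProduct_sub, dotProduct_single, mul_one, hk] at h
    rw [dotProduct_comm]
    linarith
  obtain ⟨k, hk⟩ := (hexp p hdual).2 i
  simp only [Pi.smul_apply, smul_eq_mul] at hk
  have hpp : p ⬝ᵥ p = p i := by
    have h := h1 _ h2
    rw [dotProduct_sub, dotProduct_single, mul_one] at h
    linarith
  have hqq : (Pi.single i (1 : ℝ) - p) ⬝ᵥ (Pi.single i (1 : ℝ) - p) = 1 - p i := by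
    rw [dotProduct_sub, sub_dotProduct, sub_dotProduct, hpp]
    simp
  have hself : ∀ v : Fin n → ℝ, 0 ≤ v ⬝ᵥ v := fun v =>
    Finset.sum_nonneg fun j _ => mul_self_nonneg (v j)
  have hn0 : p i ≠ 0 := by
    intro h0
    rw [h0] at hpp
    have hz : p = 0 := dotProduct_self_eq_zero.1 hpp
    rw [hz, sub_zero] at h2
    exact hloop i h2
  have hn1 : p i ≠ 1 := by
    intro h0
    rw [h0, sub_self] at hqq
    have hz := sub_eq_zero.1 (dotProduct_self_eq_zero.1 hqq)
    exact hcoloop i (hz ▸ h1)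
  have hl : 0 < p i := lt_of_le_of_ne (hpp ▸ hself p) hn0.symm
  have hu : p i < 1 := by
    have := hself (Pi.single i (1 : ℝ) - p)
    rw [hqq] at this
    exact lt_of_le_of_ne (by linarith) hn1
  have k1 : 0 < k := by
    have : (0 : ℝ) < k := by linarith
    exact_mod_cast this
  have k2 : k < 2 := by
    have : (k : ℝ) < 2 := by linarith
    exact_mod_cast this
  have k3 : k = 1 := by omega
  rw [k3] at hk
  rw [← hpi]
  push_cast at hk
  linarith
end

section
/- Let D be a totally unimodular real m×n matrix such that no index i is a loop (De_i ≠ 0 for every i) and no index i is a coloop (e_i ∉ B for every i), and suppose that 2x ∈ B_I for every x ∈ B_I^#. Then each row of the orthogonal projection matrix P onto the cut space B has exactly two nonzero entries: for every i, P_{ii} = 1/2 and there is exactly one index j ≠ i with P_{ij} ≠ 0, and for that j one has P_{ij} = 1/2 or P_{ij} = −1/2. -/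
open Matrix

variable {m n : ℕ}

/-- under the hypotheses of Statement 7, each row of the projection matrix `P`
has exactly two nonzero entries: `P i i = 1/2`, and there is exactly one `j ≠ i` with
`P i j ≠ 0`, for which `P i j = ±1/2`. -/
theorem stmt8 (m n : ℕ) (D : Matrix (Fin m) (Fin n) ℝ)
    (hTU : D.IsTotallyUnimodular)
    (hloop : ∀ i : Fin n, D.mulVec (Pi.single i (1 : ℝ)) ≠ 0)
    (hcoloop : ∀ i : Fin n, Pi.single i (1 : ℝ) ∉ cutSpace D)
    (hexp : ∀ x ∈ dualLattice D, (2 : ℝ) • x ∈ cutLattice D)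
    (P : Matrix (Fin n) (Fin n) ℝ) (hP : IsCutProjection D P) :
    ∀ i : Fin n, P i i = 1/2 ∧
      ∃ j : Fin n, j ≠ i ∧ (P i j = 1/2 ∨ P i j = -(1/2)) ∧
        ∀ k : Fin n, k ≠ i → k ≠ j → P i k = 0 := by
  classical
  have hcol : ∀ i, P.mulVec (Pi.single i (1 : ℝ)) = fun k => P k i := by
    intro i; ext k; simp
  have hkey : ∀ i j, P j i = ∑ k, P k i * P k j := by
    intro i j
    have h1 := (hP (Pi.single i 1)).1 _ (hP (Pi.single j 1)).2
    rw [hcol, hcol, dotProduct_sub, dotProduct_single, mul_one] at h1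
    simp only [dotProduct] at h1
    linarith
  have hsymm : ∀ i j, P i j = P j i := by
    intro i j
    rw [hkey i j, hkey j i]
    exact Finset.sum_congr rfl fun k _ => mul_comm _ _
  have hint : ∀ i j, ∃ a : ℤ, 2 * P i j = a := by
    intro i j
    have hmem : (fun k => P k j) ∈ dualLattice D := by
      refine ⟨hcol j ▸ (hP (Pi.single j 1)).1, ?_⟩
      intro b hb
      obtain ⟨k, hk⟩ := hb.2 j
      refine ⟨k, ?_⟩
      have h1 := hb.1 _ (hP (Pi.single j 1)).2
      rw [hcol, dotProduct_sub, dotProduct_single, mul_one, dotProduct_comm] at h1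
      linarith
    obtain ⟨a, ha⟩ := (hexp _ hmem).2 i
    exact ⟨a, by simpa using ha⟩
  choose a ha using hint
  intro i
  have hsum : ∑ k, a i k ^ 2 = 2 * a i i := by
    have h : (∑ k, (a i k : ℝ) ^ 2) = 2 * a i i := by
      simp_rw [← ha]
      rw [hkey i i, Finset.mul_sum, Finset.mul_sum]
      refine Finset.sum_congr rfl fun k _ => ?_
      rw [hsymm i k]; ring
    exact_mod_cast h
  have hsplit := Finset.add_sum_erase Finset.univ (fun k => a i k ^ 2) (Finset.mem_univ i)
  simp only [hsum] at hsplit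
  have hnn : 0 ≤ ∑ k ∈ Finset.univ.erase i, a i k ^ 2 :=
    Finset.sum_nonneg fun k _ => sq_nonneg _
  have hzero : ∀ k, a i k = 0 → P i k = 0 := by
    intro k hk
    have := ha i k
    rw [hk] at this
    simpa using this
  have hlo : 0 ≤ a i i := by nlinarith [sq_nonneg (a i i)]
  have hhi : a i i ≤ 2 := by nlinarith
  have h0 : a i i ≠ 0 := by
    intro h
    rw [h] at hsum
    have hall := (Finset.sum_eq_zero_iff_of_nonneg (fun k _ => sq_nonneg (a i k))).1
      (by simpa using hsum)
    have h2 := (hP (Pi.single i 1)).2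
    have hc : P.mulVec (Pi.single i (1 : ℝ)) = 0 := by
      rw [hcol]; ext k
      rw [hsymm k i]
      exact hzero k (by simpa using hall k (Finset.mem_univ k))
    rw [hc, sub_zero] at h2
    exact hloop i (by simpa [cycleSpace] using h2)
  have h2 : a i i ≠ 2 := by
    intro h
    rw [h] at hsplit
    have hall := (Finset.sum_eq_zero_iff_of_nonneg (s := Finset.univ.erase i)
      (fun k _ => sq_nonneg (a i k))).1 (by linarith)
    have hB := (hP (Pi.single i 1)).1
    have hc : P.mulVec (Pi.single i (1 : ℝ)) = Pi.single i 1 := by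
      rw [hcol]; ext k
      rw [hsymm k i]
      by_cases hk : k = i
      · subst hk
        have := ha k k
        rw [h] at this
        push_cast at this
        simp; linarith
      · rw [Pi.single_eq_of_ne hk]
        exact hzero k (by simpa using hall k (by simp [hk]))
    rw [hc] at hB
    exact hcoloop i hB
  have h1 : a i i = 1 := by omega
  rw [h1] at hsplit
  have hrest : ∑ k ∈ Finset.univ.erase i, a i k ^ 2 = 1 := by linarith
  refine ⟨by have := ha i i; rw [h1] at this; push_cast at this; linarith, ?_⟩
  obtain ⟨j, hj, hj0⟩ := Finset.exists_ne_zero_of_sum_ne_zero (hrest.trans_ne one_ne_zero)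
  have hs2 := Finset.add_sum_erase _ (fun k => a i k ^ 2) hj
  simp only [hrest] at hs2
  have hnn2 : 0 ≤ ∑ k ∈ (Finset.univ.erase i).erase j, a i k ^ 2 :=
    Finset.sum_nonneg fun k _ => sq_nonneg _
  have hpos : 0 < a i j ^ 2 := lt_of_le_of_ne (sq_nonneg _) (Ne.symm hj0)
  have hone : a i j ^ 2 = 1 := by omega
  have hall := (Finset.sum_eq_zero_iff_of_nonneg (s := (Finset.univ.erase i).erase j)
      (fun k _ => sq_nonneg (a i k))).1 (by omega)
  refine ⟨j, by simpa using hj, ?_, ?_⟩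
  · have := ha i j
    rcases sq_eq_sq_iff_eq_or_eq_neg.1 (hone.trans (one_pow 2).symm) with h | h <;> rw [h] at this <;> push_cast at this
    · left; linarith
    · right; linarith
  · intro k hki hkj
    exact hzero k (by simpa using hall k (by simp [hki, hkj]))
end
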